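/- The set N_t := {ω ∈ Ω_t : NA2(t,ω) fails} equals {ω ∈ Ω_t : Λ_t(ω) ∖ K_t(ω) ≠ ∅} and is universally measurable. Moreover, if NA2(𝒫) holds, then N_t is 𝒫-polar. -/

import Mathlib

/-!
Measurability and polarity of the set where the local no-arbitrage condition fails.

Let `g ω x` be the supremum over `P ∈ 𝒫_t(ω)` of the `P`-expectation of
`min 1 (dist(x, K_{t+1}(ω, ·)))`. Since `K_{t+1}` is closed, `Λ_t(ω)` is exactly the zero set of
`g ω`. The function `g ω` is `1`-Lipschitz in `x`, and for fixed `x` the set `{g · x > c}` is the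
projection of a Borel part of the analytic graph of `𝒫_t`, hence analytic, hence universally
measurable (`AnalyticSet.umSet`, `measurable_iSup_lintegral`). So `g` is a Carathéodory function
for the universal completion, although the graph of `Λ_t` is only co-analytic.

The failure set is the countable union over `m, n` of the sets of `ω` such that
`g ω x + (1/(n+1) - dist(x, K_t(ω)))⁺` vanishes for some `x` with `‖x‖ ≤ m`. For a Carathéodory
function and a compact set, having a zero is a measurable property, because it can be tested on a
countable dense subset (`measurableSet_exists_zero`), and zeros can be selected measurably
(`exists_measurable_zero`).

For polarity, a universally measurable selection `ζ` of such zeros, extended by `0`, satisfies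
`ζ(ω) ∈ Λ_t(ω)` everywhere, so `ζ ∈ K_{t+1}` almost surely for every Fubini product by
disintegration at time `t` (`fubiniProd_succ_notMem_null`). `NA2(𝒫)` then forces `ζ ∈ K_t`
quasi-surely, while `ζ ∉ K_t` on each piece of the failure set.
-/

open Finset MeasureTheory
open scoped NNReal

noncomputable section

/-- A set is universally measurable if it is null-measurable for every Borel
probability measure, i.e. belongs to every completion of the Borel σ-field. -/
def UMSet {α : Type*} [MeasurableSpace α] (s : Set α) : Prop :=
  ∀ μ : Measure α, IsProbabilityMeasure μ → NullMeasurableSet s μ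

/-- A function is measurable for the universal completion of the Borel σ-field
iff it is universally measurable. -/
def UMeasurable {α β : Type*} [MeasurableSpace α] [MeasurableSpace β] (f : α → β) : Prop :=
  ∀ B : Set β, MeasurableSet B → UMSet (f ⁻¹' B)

/-- Convexity of a set of probability measures. -/
def ConvexPM {α : Type*} [MeasurableSpace α] (S : Set (ProbabilityMeasure α)) : Prop :=
  ∀ P ∈ S, ∀ Q ∈ S, ∀ a : ℝ≥0, a ≤ 1 →
    ∃ R ∈ S, (R : Measure α) = a • (P : Measure α) + (1 - a) • (Q : Measure α)

/-- A set `N` is `𝒬`-polar if it is contained in a Borel set which is `P`-null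
for every `P ∈ 𝒬`. -/
def QPolar {α : Type*} [MeasurableSpace α]
    (𝒬 : Set (ProbabilityMeasure α)) (N : Set α) : Prop :=
  ∃ B : Set α, MeasurableSet B ∧ N ⊆ B ∧ ∀ P ∈ 𝒬, (P : Measure α) B = 0

/-- Restriction of a path `ω ∈ Ω₁^T` to its first `t` coordinates. -/
def resProj {Ω₁ : Type} [Nonempty Ω₁] (T t : ℕ) (ω : Fin T → Ω₁) : Fin t → Ω₁ :=
  fun i => if h : (i : ℕ) < T then ω ⟨i, h⟩ else Classical.arbitrary Ω₁

/-- The Fubini product `P₀ ⊗ P₁ ⊗ ⋯ ⊗ P_{t-1}` of one-step kernels. -/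
def fubiniProd {Ω₁ : Type} [MeasurableSpace Ω₁]
    (pk : (t : ℕ) → (Fin t → Ω₁) → Measure Ω₁) : (t : ℕ) → Measure (Fin t → Ω₁)
  | 0 => Measure.dirac (fun i => i.elim0)
  | (t + 1) => (fubiniProd pk t).bind fun ω => (pk t ω).map (Fin.snoc ω)

/-- The family `𝒫` of all Fubini products of universally measurable selectors
of the one-step model sets `𝒫_t`. -/
def PModels {Ω₁ : Type} [MeasurableSpace Ω₁] (T : ℕ)
    (Pt : (t : ℕ) → (Fin t → Ω₁) → Set (ProbabilityMeasure Ω₁)) :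
    Set (Measure (Fin T → Ω₁)) :=
  {P | ∃ pk : (t : ℕ) → (Fin t → Ω₁) → ProbabilityMeasure Ω₁,
    (∀ t, t < T → ∀ ω, pk t ω ∈ Pt t ω) ∧
    (∀ t, t < T → UMeasurable fun ω => (pk t ω : Measure Ω₁)) ∧
    P = fubiniProd (fun t ω => (pk t ω : Measure Ω₁)) T}

/-- Robust no-arbitrage of the second kind, `NA2(𝒫)`. -/
def NA2 (d T : ℕ) (Ω₁ : Type) [MeasurableSpace Ω₁] [Nonempty Ω₁]
    (K : (t : ℕ) → (Fin t → Ω₁) → Set (Fin d → ℝ))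
    (𝒫fam : Set (Measure (Fin T → Ω₁))) : Prop :=
  ∀ t, t < T → ∀ ζ : (Fin t → Ω₁) → Fin d → ℝ, UMeasurable ζ →
    (∀ P ∈ 𝒫fam,
      P {ω | ζ (resProj T t ω) ∉ K (t + 1) (resProj T (t + 1) ω)} = 0) →
    ∀ P ∈ 𝒫fam, P {ω | ζ (resProj T t ω) ∉ K t (resProj T t ω)} = 0

/-- `Λ_t(ω) := {x ∈ ℝ^d : x ∈ K_{t+1}(ω,·) 𝒫_t(ω)-q.s.}`. -/
def LambdaT {d t : ℕ} {Ω₁ : Type} [MeasurableSpace Ω₁]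
    (Pt : (Fin t → Ω₁) → Set (ProbabilityMeasure Ω₁))
    (K : (s : ℕ) → (Fin s → Ω₁) → Set (Fin d → ℝ)) (ω : Fin t → Ω₁) :
    Set (Fin d → ℝ) :=
  {x | QPolar (Pt ω) {ω' | x ∉ K (t + 1) (Fin.snoc ω ω')}}

/-- The local no-arbitrage condition `NA2(t, ω)`: a deterministic position that
is in `K_{t+1}(ω,·)` `𝒫_t(ω)`-q.s. belongs to `K_t(ω)`. -/
def NA2local (d t : ℕ) (Ω₁ : Type) [MeasurableSpace Ω₁]
    (Pt : (Fin t → Ω₁) → Set (ProbabilityMeasure Ω₁))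
    (K : (s : ℕ) → (Fin s → Ω₁) → Set (Fin d → ℝ)) (ω : Fin t → Ω₁) : Prop :=
  ∀ ζ : Fin d → ℝ, QPolar (Pt ω) {ω' | ζ ∉ K (t + 1) (Fin.snoc ω ω')} → ζ ∈ K t ω

open scoped ENNReal

/-! ### Universal measurability of analytic sets -/

/-- The σ-field of universally measurable sets, i.e. the universal completion of the given
σ-field. It is a plain definition, to be supplied explicitly as a measurable structure. -/
@[reducible] def umSpace (α : Type*) [MeasurableSpace α] : MeasurableSpace α where
  MeasurableSet' := UMSet
  measurableSet_empty := fun _ _ => MeasurableSet.empty.nullMeasurableSet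
  measurableSet_compl := fun _ hs μ hμ => (hs μ hμ).compl
  measurableSet_iUnion := fun _ hf μ hμ => NullMeasurableSet.iUnion fun i => hf i μ hμ

lemma le_umSpace {α : Type*} [m : MeasurableSpace α] : m ≤ umSpace α :=
  fun _ hs _ _ => hs.nullMeasurableSet

/-- Inner regularity of a finite measure on a Souslin set: the range of a continuous map on Baire
space contains closed sets of almost full outer measure. -/
lemma exists_isClosed_subset_range {α : Type*} [TopologicalSpace α] [PolishSpace α]
    [MeasurableSpace α] [BorelSpace α] (μ : Measure α) [IsFiniteMeasure μ]
    (f : (ℕ → ℕ) → α) (hf : Continuous f) (ε : ℝ≥0∞) (hε : ε ≠ 0) :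
    ∃ C ⊆ Set.range f, IsClosed C ∧ μ (Set.range f) ≤ μ C + ε := by
  let _ := TopologicalSpace.metrizableSpaceMetric α
  obtain ⟨δ, hδ, hδs⟩ := ENNReal.exists_pos_sum_of_countable hε ℕ
  -- Bounding one more coordinate of the arguments costs arbitrarily little outer measure.
  have step : ∀ (S : Set (ℕ → ℕ)) (i : ℕ), ∃ m : ℕ,
      μ (f '' S) ≤ μ (f '' (S ∩ {x | x i ≤ m})) + δ i := by
    intro S i
    have hmono : Monotone fun m : ℕ => f '' (S ∩ {x | x i ≤ m}) := by
      intro a b hab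
      apply Set.image_mono
      rintro x ⟨hx, hxa⟩
      exact ⟨hx, le_trans hxa hab⟩
    have hU : f '' S = ⋃ m : ℕ, f '' (S ∩ {x | x i ≤ m}) := by
      rw [← Set.image_iUnion]
      congr 1
      ext x
      simp only [Set.mem_iUnion, Set.mem_inter_iff, Set.mem_ofPred_eq]
      exact ⟨fun h => ⟨x i, h, le_rfl⟩, fun ⟨_, h, _⟩ => h⟩
    have hsup := hmono.measure_iUnion (μ := μ)
    rw [← hU] at hsup
    by_cases h0 : μ (f '' S) = 0
    · exact ⟨0, by rw [h0]; exact zero_le⟩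
    have hlt : μ (f '' S) - δ i < ⨆ m : ℕ, μ (f '' (S ∩ {x | x i ≤ m})) := by
      rw [← hsup]
      exact ENNReal.sub_lt_self (measure_ne_top _ _) h0 (by exact_mod_cast (hδ i).ne')
    obtain ⟨m, hm⟩ := lt_iSup_iff.1 hlt
    exact ⟨m, tsub_le_iff_right.1 hm.le⟩
  choose m hm using step
  let S : ℕ → Set (ℕ → ℕ) := fun k =>
    Nat.rec Set.univ (fun k S => S ∩ {x | x k ≤ m S k}) k
  have hS1 : ∀ k, S (k + 1) = S k ∩ {x | x k ≤ m (S k) k} := fun k => rfl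
  have hSmem : ∀ k x, x ∈ S k ↔ ∀ i < k, x i ≤ m (S i) i := by
    intro k x
    induction k with
    | zero => simp [S]
    | succ k ih =>
      rw [hS1, Set.mem_inter_iff, ih]
      simp only [Set.mem_ofPred_eq, Nat.lt_succ_iff_lt_or_eq]
      constructor
      · rintro ⟨h1, h2⟩ i (h | rfl)
        exacts [h1 i h, h2]
      · intro h
        exact ⟨fun i hi => h i (Or.inl hi), h k (Or.inr rfl)⟩
  have hμS : ∀ k, μ (Set.range f) ≤ μ (f '' S k) + ∑ i ∈ Finset.range k, (δ i : ℝ≥0∞) := by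
    intro k
    induction k with
    | zero => simp [S]
    | succ k ih =>
      refine ih.trans ?_
      rw [Finset.sum_range_succ, hS1, add_comm (∑ i ∈ Finset.range k, _), ← add_assoc]
      gcongr
      exact hm _ _
  refine ⟨⋂ k, closure (f '' S k), ?_, isClosed_iInter fun _ => isClosed_closure, ?_⟩
  · intro y hy
    have hx : ∀ k : ℕ, ∃ x ∈ S k, dist y (f x) < 1 / ((k : ℝ) + 1) := by
      intro k
      obtain ⟨_, ⟨x, hx, rfl⟩, hd⟩ :=
        Metric.mem_closure_iff.1 (Set.mem_iInter.1 hy k) _ (Nat.one_div_pos_of_nat (n := k))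
      exact ⟨x, hx, hd⟩
    choose x hxS hxd using hx
    -- Truncating the arguments places them in a compact product without moving the limit.
    have hKc : IsCompact (Set.univ.pi fun i => Set.Iic (m (S i) i)) :=
      isCompact_univ_pi fun i => (Set.finite_Iic _).isCompact
    obtain ⟨z, -, φ, hφ, hz⟩ := hKc.tendsto_subseq (x := fun k i => min (x k i) (m (S i) i))
      (fun k i _ => Set.mem_Iic.2 (min_le_right _ _))
    have hxz : Filter.Tendsto (x ∘ φ) Filter.atTop (nhds z) := by
      rw [tendsto_pi_nhds] at hz ⊢
      intro i
      refine (hz i).congr' ?_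
      filter_upwards [Filter.eventually_gt_atTop i] with k hk
      exact min_eq_left ((hSmem _ _).1 (hxS (φ k)) i (hk.trans_le (hφ.id_le k)))
    have h1 : Filter.Tendsto (fun k => f (x (φ k))) Filter.atTop (nhds (f z)) :=
      (hf.tendsto z).comp hxz
    have h2 : Filter.Tendsto (fun k => f (x k)) Filter.atTop (nhds y) := by
      rw [tendsto_iff_dist_tendsto_zero]
      refine squeeze_zero (fun _ => dist_nonneg) (fun k => ?_)
        tendsto_one_div_add_atTop_nhds_zero_nat
      rw [dist_comm]
      exact (hxd k).le
    exact ⟨z, tendsto_nhds_unique h1 (h2.comp hφ.tendsto_atTop)⟩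
  · have hanti : Antitone fun k => closure (f '' S k) := by
      refine antitone_nat_of_succ_le fun k => closure_mono (Set.image_mono ?_)
      rw [hS1]
      exact Set.inter_subset_left
    rw [hanti.measure_iInter (fun k => isClosed_closure.measurableSet.nullMeasurableSet)
      ⟨0, measure_ne_top _ _⟩, ENNReal.iInf_add]
    refine le_iInf fun k => (hμS k).trans ?_
    gcongr
    · exact subset_closure
    · exact (ENNReal.sum_le_tsum _).trans hδs.le

/-- Analytic subsets of a Polish space are universally measurable. -/
lemma AnalyticSet.umSet {α : Type*} [TopologicalSpace α] [PolishSpace α]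
    [MeasurableSpace α] [BorelSpace α] {s : Set α} (hs : AnalyticSet s) : UMSet s := by
  rw [AnalyticSet] at hs
  rcases hs with rfl | ⟨f, hf, rfl⟩
  · exact fun _ _ => MeasurableSet.empty.nullMeasurableSet
  intro μ hμ
  choose C hCs hCc hC using fun n : ℕ =>
    exists_isClosed_subset_range μ f hf ((n : ℝ≥0∞) + 1)⁻¹ (by simp)
  have hB : MeasurableSet (⋃ n, C n) := MeasurableSet.iUnion fun n => (hCc n).measurableSet
  have hle : μ (Set.range f) ≤ μ (⋃ n, C n) := by
    have hlim : Filter.Tendsto (fun n : ℕ => μ (⋃ n, C n) + ((n : ℝ≥0∞) + 1)⁻¹)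
        Filter.atTop (nhds (μ (⋃ n, C n) + 0)) := by
      refine tendsto_const_nhds.add ?_
      have := (Filter.tendsto_add_atTop_iff_nat 1).2 ENNReal.tendsto_inv_nat_nhds_zero
      simpa using this
    rw [add_zero] at hlim
    refine ge_of_tendsto' hlim fun n => (hC n).trans ?_
    gcongr
    exact Set.subset_iUnion C n
  exact NullMeasurableSet.congr hB.nullMeasurableSet
    (ae_eq_of_subset_of_measure_ge (Set.iUnion_subset hCs) hle hB.nullMeasurableSet
      (measure_ne_top _ _))

/-! ### Worst-case expectations -/

/-- Portmanteau: weakly continuous families of probability measures are measurable kernels. -/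
lemma measurable_coe_of_continuous {Y Ω : Type*} [TopologicalSpace Y] [MeasurableSpace Y]
    [BorelSpace Y] [TopologicalSpace Ω] [PolishSpace Ω] [MeasurableSpace Ω] [BorelSpace Ω]
    (f : Y → ProbabilityMeasure Ω) (hf : Continuous f) :
    Measurable fun y => (f y : Measure Ω) := by
  let _ := TopologicalSpace.metrizableSpaceMetric Ω
  refine Measurable.measure_of_isPiSystem_of_isProbabilityMeasure
    (S := {s | IsOpen s}) ?_ isPiSystem_isOpen ?_
  · exact BorelSpace.measurable_eq
  · intro G hG
    refine LowerSemicontinuous.measurable ?_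
    rw [lowerSemicontinuous_iff_le_liminf]
    intro y
    exact ProbabilityMeasure.le_liminf_measure_open_of_tendsto (hf.tendsto y) hG

/-- A worst-case expectation over a family of models with analytic graph is universally
measurable: its strict superlevel sets are projections of Borel subsets of that graph. -/
lemma measurable_iSup_lintegral {X Ω : Type*} [TopologicalSpace X] [PolishSpace X]
    [MeasurableSpace X] [BorelSpace X] [TopologicalSpace Ω] [PolishSpace Ω] [MeasurableSpace Ω]
    [BorelSpace Ω] (Γ : X → Set (ProbabilityMeasure Ω))
    (hΓ : AnalyticSet {p : X × ProbabilityMeasure Ω | p.2 ∈ Γ p.1})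
    (h : X → Ω → ℝ≥0∞) (hh : Measurable (Function.uncurry h)) :
    Measurable[umSpace X] fun x => ⨆ P ∈ Γ x, ∫⁻ w, h x w ∂(P : Measure Ω) := by
  refine measurable_of_Ioi (mδ := umSpace X) fun c => ?_
  have heq : (fun x => ⨆ P ∈ Γ x, ∫⁻ w, h x w ∂(P : Measure Ω)) ⁻¹' Set.Ioi c =
      {x | ∃ P ∈ Γ x, c < ∫⁻ w, h x w ∂(P : Measure Ω)} := by
    ext x
    simp only [Set.mem_preimage, Set.mem_Ioi, lt_iSup_iff, Set.mem_ofPred_eq, exists_prop]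
  rw [heq]
  refine AnalyticSet.umSet ?_
  rw [AnalyticSet] at hΓ
  rcases hΓ with h0 | ⟨f, hf, hr⟩
  · convert analyticSet_empty
    ext x
    simp only [Set.mem_ofPred_eq, Set.mem_empty_iff_false, iff_false, not_exists, not_and]
    intro P hP _
    have : (x, P) ∈ {p : X × ProbabilityMeasure Ω | p.2 ∈ Γ p.1} := hP
    rw [h0] at this
    exact this
  · have hmeas := measurable_coe_of_continuous (fun y => (f y).2) (continuous_snd.comp hf)
    let κ : ProbabilityTheory.Kernel (ℕ → ℕ) Ω := ⟨fun y => ((f y).2 : Measure Ω), hmeas⟩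
    have : ProbabilityTheory.IsMarkovKernel κ :=
      ⟨fun y => inferInstanceAs (IsProbabilityMeasure ((f y).2 : Measure Ω))⟩
    have hfst : Measurable fun y => (f y).1 := (continuous_fst.comp hf).measurable
    have hint : Measurable fun y => ∫⁻ w, h (f y).1 w ∂((f y).2 : Measure Ω) := by
      refine Measurable.lintegral_kernel_prod_right (κ := κ)
        (f := fun y w => h (f y).1 w) ?_
      exact hh.comp ((hfst.comp measurable_fst).prodMk measurable_snd)
    have := (hint measurableSet_Ioi : MeasurableSet
      ((fun y => ∫⁻ w, h (f y).1 w ∂((f y).2 : Measure Ω)) ⁻¹' Set.Ioi c)).analyticSet_image hfst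
    convert this using 1
    ext x
    simp only [Set.mem_ofPred_eq, Set.mem_image, Set.mem_preimage, Set.mem_Ioi]
    constructor
    · rintro ⟨P, hP, hc⟩
      have : (x, P) ∈ Set.range f := by rw [hr]; exact hP
      obtain ⟨y, hy⟩ := this
      exact ⟨y, by rw [hy]; exact hc, by rw [hy]⟩
    · rintro ⟨y, hc, rfl⟩
      have : f y ∈ Set.range f := ⟨y, rfl⟩
      rw [hr] at this
      exact ⟨(f y).2, this, hc⟩

/-! ### Zeros of Carathéodory functions and random closed sets -/

/-- Whether a Carathéodory function vanishes somewhere on a compact set is decided by its values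
on a countable dense subset. -/
lemma measurableSet_exists_zero {α E : Type*} [MeasurableSpace α] [MetricSpace E]
    [SecondCountableTopology E] (φ : α → E → ℝ≥0∞) (hc : ∀ a, Continuous (φ a))
    (hm : ∀ x, Measurable fun a => φ a x) {C : Set E} (hC : IsCompact C) :
    MeasurableSet {a | ∃ x ∈ C, φ a x = 0} := by
  obtain ⟨D, hDC, hD, hCD⟩ :=
    (TopologicalSpace.IsSeparable.of_separableSpace C).exists_countable_dense_subset
  have heq : {a | ∃ x ∈ C, φ a x = 0} =
      ⋂ n : ℕ, ⋃ q ∈ D, {a | φ a q < ((n : ℝ≥0∞) + 1)⁻¹} := by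
    ext a
    simp only [Set.mem_ofPred_eq, Set.mem_iInter, Set.mem_iUnion, exists_prop]
    constructor
    · rintro ⟨x, hx, h0⟩ n
      have hopen : IsOpen {y | φ a y < ((n : ℝ≥0∞) + 1)⁻¹} :=
        isOpen_lt (hc a) continuous_const
      obtain ⟨q, hq, hqD⟩ := mem_closure_iff.1 (hCD hx) _ hopen (by simp [h0])
      exact ⟨q, hqD, hq⟩
    · intro h
      obtain ⟨q, hq, -⟩ := h 0
      obtain ⟨x, hx, hmin⟩ := hC.exists_isMinOn ⟨q, hDC hq⟩ (hc a).continuousOn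
      refine ⟨x, hx, ?_⟩
      by_contra h0
      obtain ⟨n, hn⟩ := ENNReal.exists_inv_nat_lt h0
      obtain ⟨q, hq, hlt⟩ := h n
      have h1 : φ a x ≤ φ a q := hmin (hDC hq)
      have h2 : ((n : ℝ≥0∞) + 1)⁻¹ ≤ (n : ℝ≥0∞)⁻¹ := ENNReal.inv_le_inv.2 le_self_add
      exact absurd (h1.trans_lt (hlt.trans_le (h2.trans hn.le))) (lt_irrefl _)
  rw [heq]
  exact MeasurableSet.iInter fun n => MeasurableSet.biUnion hD fun q _ =>
    measurableSet_lt (hm q) measurable_const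

lemma exists_measurable_nat_choice {α : Type*} [MeasurableSpace α] (p : α → ℕ → Prop)
    (hp : ∀ j, MeasurableSet {a | p a j}) :
    ∃ f : α → ℕ, Measurable f ∧ ∀ a, (∃ j, p a j) → p a (f a) := by
  classical
  have hex : ∀ a, ∃ j, p a j ∨ ∀ i, ¬ p a i := by
    intro a
    by_cases h : ∃ j, p a j
    · exact ⟨h.choose, Or.inl h.choose_spec⟩
    · exact ⟨0, Or.inr (not_exists.1 h)⟩
  refine ⟨fun a => Nat.find (hex a), measurable_find hex fun k => ?_, fun a ⟨j, hj⟩ => ?_⟩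
  · have : {a | p a k ∨ ∀ i, ¬ p a i} = {a | p a k} ∪ ⋂ i, {a | p a i}ᶜ := by
      ext a; simp
    rw [this]
    exact (hp k).union (MeasurableSet.iInter fun i => (hp i).compl)
  · rcases Nat.find_spec (hex a) with h | h
    · exact h
    · exact absurd hj (h j)

/-- Measurable selection of zeros of a Carathéodory function in a compact set, by the successive
approximation scheme of Kuratowski and Ryll-Nardzewski. -/
lemma exists_measurable_zero {α E : Type*} [MeasurableSpace α] [MetricSpace E]
    [SecondCountableTopology E] [CompleteSpace E] [Nonempty E] [MeasurableSpace E] [BorelSpace E]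
    (φ : α → E → ℝ≥0∞) (hc : ∀ a, Continuous (φ a))
    (hm : ∀ x, Measurable fun a => φ a x) {C : Set E} (hC : IsCompact C) :
    ∃ ζ : α → E, Measurable ζ ∧ ∀ a, (∃ x ∈ C, φ a x = 0) → ζ a ∈ C ∧ φ a (ζ a) = 0 := by
  classical
  set q : ℕ → E := TopologicalSpace.denseSeq E with hq
  have hdense : ∀ x : E, ∀ r : ℝ, 0 < r → ∃ j, dist x (q j) < r := by
    intro x r hr
    obtain ⟨_, ⟨j, rfl⟩, h⟩ := Metric.mem_closure_iff.1
      (TopologicalSpace.denseRange_denseSeq E x) r hr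
    exact ⟨j, h⟩
  let A : E → ℝ → Set α := fun c r => {a | ∃ x ∈ C ∩ Metric.closedBall c r, φ a x = 0}
  have hA : ∀ c r, MeasurableSet (A c r) := fun c r =>
    measurableSet_exists_zero φ hc hm (hC.inter_right Metric.isClosed_closedBall)
  have hN := measurableSet_exists_zero φ hc hm hC
  have start : ∃ u : α → ℕ, Measurable u ∧
      ∀ a, (∃ x ∈ C, φ a x = 0) → a ∈ A (q (u a)) ((1 / 2 : ℝ) ^ 0) := by
    obtain ⟨u, hu, hu'⟩ := exists_measurable_nat_choice
      (fun a j => a ∈ A (q j) ((1 / 2 : ℝ) ^ 0)) (fun j => hA _ _)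
    refine ⟨u, hu, fun a ⟨x, hx, h0⟩ => hu' a ?_⟩
    obtain ⟨j, hj⟩ := hdense x ((1 / 2 : ℝ) ^ 0) (by positivity)
    exact ⟨j, x, ⟨hx, hj.le⟩, h0⟩
  have step : ∀ (k : ℕ) (u : {u : α → ℕ // Measurable u}), ∃ v : {v : α → ℕ // Measurable v},
      ∀ a, a ∈ A (q (u.1 a)) ((1 / 2 : ℝ) ^ k) →
        a ∈ A (q (v.1 a)) ((1 / 2 : ℝ) ^ (k + 1)) ∧
          dist (q (u.1 a)) (q (v.1 a)) ≤ 2 * (1 / 2 : ℝ) ^ k := by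
    rintro k ⟨u, hu⟩
    obtain ⟨v, hv, hv'⟩ := exists_measurable_nat_choice
      (fun a j => a ∈ A (q j) ((1 / 2 : ℝ) ^ (k + 1)) ∧
        dist (q (u a)) (q j) ≤ 2 * (1 / 2 : ℝ) ^ k) (fun j => by
          refine (hA _ _).inter ?_
          exact measurableSet_preimage hu
            (t := {i | dist (q i) (q j) ≤ 2 * (1 / 2 : ℝ) ^ k}) (MeasurableSet.of_discrete))
    refine ⟨⟨v, hv⟩, fun a ⟨x, ⟨hx, hxu⟩, h0⟩ => hv' a ?_⟩
    obtain ⟨j, hj⟩ := hdense x ((1 / 2 : ℝ) ^ (k + 1)) (by positivity)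
    refine ⟨j, ⟨x, ⟨hx, hj.le⟩, h0⟩, ?_⟩
    have h1 : dist x (q (u a)) ≤ (1 / 2 : ℝ) ^ k := hxu
    have h2 := dist_triangle_left (q (u a)) (q j) x
    have h3 : (1 / 2 : ℝ) ^ (k + 1) ≤ (1 / 2 : ℝ) ^ k :=
      pow_le_pow_of_le_one (by norm_num) (by norm_num) (Nat.le_succ k)
    linarith
  obtain ⟨u0, hu0, hu0'⟩ := start
  choose F hF using step
  let idx : ℕ → {u : α → ℕ // Measurable u} := fun k => Nat.rec ⟨u0, hu0⟩ F k
  have hidx : ∀ k a, (∃ x ∈ C, φ a x = 0) → a ∈ A (q ((idx k).1 a)) ((1 / 2 : ℝ) ^ k) := by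
    intro k a ha
    induction k with
    | zero => exact hu0' a ha
    | succ k ih => exact (hF k (idx k) a ih).1
  let s : ℕ → α → E := fun k a => if ∃ x ∈ C, φ a x = 0 then q ((idx k).1 a) else q 0
  have hs : ∀ k, Measurable (s k) := fun k =>
    Measurable.ite hN (measurable_from_nat.comp (idx k).2) measurable_const
  have hlim : ∀ a, ∃ z, Filter.Tendsto (fun k => s k a) Filter.atTop (nhds z) := by
    intro a
    by_cases ha : ∃ x ∈ C, φ a x = 0
    · refine cauchySeq_tendsto_of_complete
        (cauchySeq_of_le_geometric (1 / 2 : ℝ) 2 (by norm_num) fun k => ?_)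
      simp only [s, if_pos ha]
      exact (hF k (idx k) a (hidx k a ha)).2
    · simp only [s, if_neg ha]
      exact ⟨_, tendsto_const_nhds⟩
  choose ζ hζ using hlim
  refine ⟨ζ, measurable_of_tendsto_metrizable hs (tendsto_pi_nhds.2 hζ), fun a ha => ?_⟩
  choose x hx hx0 using fun k => hidx k a ha
  have hxlim : Filter.Tendsto x Filter.atTop (nhds (ζ a)) := by
    refine (hζ a).congr_dist (squeeze_zero (fun _ => dist_nonneg) (fun k => ?_)
      (tendsto_pow_atTop_nhds_zero_of_lt_one (r := (1 / 2 : ℝ)) (by norm_num) (by norm_num)))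
    simp only [s, if_pos ha]
    rw [dist_comm]
    exact (hx k).2
  refine ⟨hC.isClosed.mem_of_tendsto hxlim (Filter.Eventually.of_forall fun k => (hx k).1), ?_⟩
  have h1 := ((hc a).tendsto (ζ a)).comp hxlim
  have h2 : φ a ∘ x = fun _ => 0 := funext hx0
  rw [h2] at h1
  exact (tendsto_nhds_unique h1 tendsto_const_nhds)

/-- For closed sets in a proper space, measurability of hitting sets of closed sets gives
measurability of the distance functions. -/
lemma measurable_infEDist_of_hit {α E : Type*} [MeasurableSpace α] [MetricSpace E] [ProperSpace E]
    (K : α → Set E) (hK : ∀ C : Set E, IsClosed C → MeasurableSet {a | (K a ∩ C).Nonempty})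
    (hcl : ∀ a, IsClosed (K a)) (hne : ∀ a, (K a).Nonempty) (x : E) :
    Measurable fun a => Metric.infEDist x (K a) := by
  refine measurable_of_Iic fun r => ?_
  convert hK (Metric.closedEBall x r) Metric.isClosed_closedEBall using 1
  ext a
  simp only [Set.mem_preimage, Set.mem_Iic, Set.mem_ofPred_eq]
  constructor
  · intro h
    obtain ⟨y, hy, hxy⟩ := (hcl a).exists_infDist_eq_dist (hne a) x
    refine ⟨y, hy, ?_⟩
    rw [Metric.mem_closedEBall, edist_comm, edist_dist, ← hxy, Metric.infDist,
      ENNReal.ofReal_toReal (Metric.infEDist_ne_top (hne a))]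
    exact h
  · rintro ⟨y, hy, hyr⟩
    rw [Metric.mem_closedEBall, edist_comm] at hyr
    exact (Metric.infEDist_le_edist_of_mem hy).trans hyr

/-! ### Null sets of Fubini products -/

lemma measurable_snoc {Ω₁ : Type} [MeasurableSpace Ω₁] (n : ℕ) :
    Measurable fun p : (Fin n → Ω₁) × Ω₁ => (Fin.snoc p.1 p.2 : Fin (n + 1) → Ω₁) := by
  refine measurable_pi_lambda _ fun i => ?_
  refine Fin.lastCases ?_ (fun j => ?_) i
  · simpa using measurable_snd
  · simpa using measurable_fst.eval (a := j)

lemma measurable_snoc_right {Ω₁ : Type} [MeasurableSpace Ω₁] {n : ℕ} (ω : Fin n → Ω₁) :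
    Measurable fun w : Ω₁ => (Fin.snoc ω w : Fin (n + 1) → Ω₁) :=
  (measurable_snoc n).comp measurable_prodMk_left

lemma measurable_init {Ω₁ : Type} [MeasurableSpace Ω₁] (n : ℕ) :
    Measurable fun ω : Fin (n + 1) → Ω₁ => (Fin.init ω : Fin n → Ω₁) :=
  measurable_pi_lambda _ fun i => measurable_pi_apply i.castSucc

/-- No measurability of the kernels is needed here: `Measure.bind` is zero when the integrand is
not almost everywhere measurable. -/
lemma fubiniProd_succ_null {Ω₁ : Type} [MeasurableSpace Ω₁]
    (pk : (t : ℕ) → (Fin t → Ω₁) → Measure Ω₁) (n : ℕ) {B : Set (Fin (n + 1) → Ω₁)}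
    (hB : MeasurableSet B)
    (h : ∀ᵐ ω ∂(fubiniProd pk n), pk n ω {w | (Fin.snoc ω w : Fin (n + 1) → Ω₁) ∈ B} = 0) :
    fubiniProd pk (n + 1) B = 0 := by
  rw [fubiniProd]
  refine le_antisymm ((Measure.bind_apply_le _ hB).trans (le_of_eq ?_)) zero_le
  refine lintegral_eq_zero_of_ae_eq_zero ?_
  filter_upwards [h] with ω hω
  rw [Measure.map_apply (measurable_snoc_right ω) hB]
  exact hω

lemma fubiniProd_init_null {Ω₁ : Type} [MeasurableSpace Ω₁]
    (pk : (t : ℕ) → (Fin t → Ω₁) → Measure Ω₁) (n : ℕ) {N : Set (Fin n → Ω₁)}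
    (hN : fubiniProd pk n N = 0) :
    fubiniProd pk (n + 1) {ω | (Fin.init ω : Fin n → Ω₁) ∈ N} = 0 := by
  have h0 : fubiniProd pk n (toMeasurable (fubiniProd pk n) N) = 0 := by
    rw [measure_toMeasurable, hN]
  refine measure_mono_null (t := (fun ω : Fin (n + 1) → Ω₁ => (Fin.init ω : Fin n → Ω₁)) ⁻¹'
    toMeasurable (fubiniProd pk n) N) (fun ω hω => subset_toMeasurable _ _ hω) ?_
  refine fubiniProd_succ_null pk n (measurable_init n (measurableSet_toMeasurable _ _)) ?_
  filter_upwards [measure_eq_zero_iff_ae_notMem.1 h0] with ω hω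
  simp [hω]

lemma resProj_succ {Ω₁ : Type} [Nonempty Ω₁] {u t : ℕ} (h : t ≤ u) (ω : Fin (u + 1) → Ω₁) :
    resProj (u + 1) t ω = resProj u t (Fin.init ω) := by
  ext i
  have h1 : (i : ℕ) < u := i.2.trans_le h
  simp only [resProj, dif_pos h1, dif_pos (h1.trans (Nat.lt_succ_self u))]
  rfl

lemma init_resProj {Ω₁ : Type} [Nonempty Ω₁] (T t : ℕ) (ω : Fin T → Ω₁) :
    (Fin.init (resProj T (t + 1) ω) : Fin t → Ω₁) = resProj T t ω := by
  ext i
  simp [Fin.init, resProj]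

lemma fubiniProd_resProj_null {Ω₁ : Type} [MeasurableSpace Ω₁] [Nonempty Ω₁]
    (pk : (t : ℕ) → (Fin t → Ω₁) → Measure Ω₁) {t u : ℕ} (htu : t ≤ u) {N : Set (Fin t → Ω₁)}
    (hN : fubiniProd pk t N = 0) : fubiniProd pk u {ω | resProj u t ω ∈ N} = 0 := by
  induction u, htu using Nat.le_induction with
  | base =>
    convert hN using 2
    ext ω
    have : resProj t t ω = ω := by
      ext i
      simp [resProj]
    simp [this]
  | succ u hu ih =>
    simp only [resProj_succ hu]
    exact fubiniProd_init_null pk u ih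

/-- The zero alternative covers kernels whose `Measure.bind` is a junk value. -/
lemma fubiniProd_eq_zero_or_isProbabilityMeasure {Ω₁ : Type} [MeasurableSpace Ω₁]
    (pk : (t : ℕ) → (Fin t → Ω₁) → ProbabilityMeasure Ω₁) (n : ℕ) :
    fubiniProd (fun t ω => (pk t ω : Measure Ω₁)) n = 0 ∨
      IsProbabilityMeasure (fubiniProd (fun t ω => (pk t ω : Measure Ω₁)) n) := by
  induction n with
  | zero => exact Or.inr (by rw [fubiniProd]; infer_instance)
  | succ n ih =>
    rw [fubiniProd]
    rcases ih with h | h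
    · left
      rw [h, Measure.bind_zero_left]
    · by_cases hm : AEMeasurable
        (fun ω => (pk n ω : Measure Ω₁).map fun w => (Fin.snoc ω w : Fin (n + 1) → Ω₁))
        (fubiniProd (fun t ω => (pk t ω : Measure Ω₁)) n)
      · right
        exact isProbabilityMeasure_bind hm (Filter.Eventually.of_forall fun ω =>
          Measure.isProbabilityMeasure_map (measurable_snoc_right ω).aemeasurable)
      · left
        rw [Measure.bind, Measure.map_of_not_aemeasurable hm, Measure.join_zero]

/-- A universally measurable position that is solvent one step ahead under every one-step model
is solvent almost surely under the corresponding Fubini product. The position is replaced by an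
almost everywhere equal Borel one, so that the failure set becomes Borel. -/
lemma fubiniProd_succ_notMem_null {d t : ℕ} {Ω₁ : Type} [MeasurableSpace Ω₁]
    (pk : (t : ℕ) → (Fin t → Ω₁) → ProbabilityMeasure Ω₁)
    (K : (Fin (t + 1) → Ω₁) → Set (Fin d → ℝ))
    (hcl : ∀ w, IsClosed (K w))
    (hmeas : ∀ x, Measurable fun w => Metric.infEDist x (K w))
    (ζ : (Fin t → Ω₁) → Fin d → ℝ) (hζ : UMeasurable ζ)
    (h : ∀ ω, (pk t ω : Measure Ω₁) {w | ζ ω ∉ K (Fin.snoc ω w)} = 0) :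
    fubiniProd (fun t ω => (pk t ω : Measure Ω₁)) (t + 1) {w | ζ (Fin.init w) ∉ K w} = 0 := by
  set pk' : (t : ℕ) → (Fin t → Ω₁) → Measure Ω₁ := fun t ω => (pk t ω : Measure Ω₁) with hpk'
  have hae : AEMeasurable ζ (fubiniProd pk' t) := by
    rcases fubiniProd_eq_zero_or_isProbabilityMeasure pk t with h0 | hP
    · rw [hpk', h0]
      exact aemeasurable_zero_measure
    · have hn : NullMeasurable ζ (fubiniProd pk' t) := fun B hB => hζ B hB _ hP
      exact hn.aemeasurable
  have hN : fubiniProd pk' t {ω | ζ ω ≠ hae.mk ζ ω} = 0 := hae.ae_eq_mk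
  have hjoint : Measurable fun p : (Fin d → ℝ) × (Fin (t + 1) → Ω₁) =>
      Metric.infEDist p.1 (K p.2) :=
    measurable_uncurry_of_continuous_of_measurable
      (u := fun (x : Fin d → ℝ) (w : Fin (t + 1) → Ω₁) => Metric.infEDist x (K w))
      (fun _ => Metric.continuous_infEDist) hmeas
  let B : Set (Fin (t + 1) → Ω₁) := {w | Metric.infEDist (hae.mk ζ (Fin.init w)) (K w) ≠ 0}
  have hmem : ∀ x w, x ∉ K w ↔ Metric.infEDist x (K w) ≠ 0 := fun x w =>
    not_congr (Metric.mem_iff_infEDist_zero_of_closed (hcl w))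
  have hB : MeasurableSet B := by
    have : Measurable fun w : Fin (t + 1) → Ω₁ =>
        Metric.infEDist (hae.mk ζ (Fin.init w)) (K w) :=
      hjoint.comp ((hae.measurable_mk.comp (measurable_init t)).prodMk measurable_id)
    exact this (measurableSet_singleton 0).compl
  have hB0 : fubiniProd pk' (t + 1) B = 0 := by
    refine fubiniProd_succ_null pk' t hB ?_
    filter_upwards [hae.ae_eq_mk] with ω hω
    refine measure_mono_null (fun w hw => ?_) (h ω)
    have hw' : Metric.infEDist (hae.mk ζ (Fin.init (Fin.snoc ω w : Fin (t + 1) → Ω₁)))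
      (K (Fin.snoc ω w)) ≠ 0 := hw
    rw [Fin.init_snoc, ← hω] at hw'
    exact (hmem _ _).2 hw'
  refine measure_mono_null (fun w hw => ?_)
    (measure_union_null hB0 (fubiniProd_init_null pk' t hN))
  by_cases hEq : ζ (Fin.init w) = hae.mk ζ (Fin.init w)
  · left
    refine (hmem _ _).1 ?_
    rw [← hEq]
    exact hw
  · exact Or.inr hEq

/-! ### The failure set -/

/-- Lemma 3.4: `N_t = {ω : NA2(t,ω) fails}` equals
`{ω : Λ_t(ω) ∖ K_t(ω) ≠ ∅}`, is universally measurable, and is `𝒫`-polar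
whenever `NA2(𝒫)` holds. -/
theorem na2_fail_set_polar (d T t : ℕ) (hd : 1 ≤ d) (hT : 1 ≤ T) (ht : t < T)
    (Ω₁ : Type) [TopologicalSpace Ω₁] [PolishSpace Ω₁] [MeasurableSpace Ω₁]
    [BorelSpace Ω₁] [Nonempty Ω₁]
    (Pt : (s : ℕ) → (Fin s → Ω₁) → Set (ProbabilityMeasure Ω₁))
    (hPtne : ∀ s, s < T → ∀ ω, (Pt s ω).Nonempty)
    (hPtconv : ∀ s, s < T → ∀ ω, ConvexPM (Pt s ω))
    (hPtgraph : ∀ s, s < T → AnalyticSet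
      {p : (Fin s → Ω₁) × ProbabilityMeasure Ω₁ | p.2 ∈ Pt s p.1})
    (K : (s : ℕ) → (Fin s → Ω₁) → Set (Fin d → ℝ))
    (hKmeas : ∀ s, s ≤ T → ∀ C : Set (Fin d → ℝ), IsClosed C →
      MeasurableSet {ω : Fin s → Ω₁ | (K s ω ∩ C).Nonempty})
    (hKclosed : ∀ s, s ≤ T → ∀ ω, IsClosed (K s ω))
    (hKconv : ∀ s, s ≤ T → ∀ ω, Convex ℝ (K s ω))
    (hKcone : ∀ s, s ≤ T → ∀ ω, ∀ x ∈ K s ω, ∀ a : ℝ, 0 ≤ a → a • x ∈ K s ω)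
    (hKorth : ∀ s, s ≤ T → ∀ ω, {x : Fin d → ℝ | ∀ i, 0 ≤ x i} ⊆ K s ω) :
    {ω : Fin t → Ω₁ | ¬ NA2local d t Ω₁ (Pt t) K ω} =
      {ω : Fin t → Ω₁ | (LambdaT (Pt t) K ω \ K t ω).Nonempty} ∧
    UMSet {ω : Fin t → Ω₁ | ¬ NA2local d t Ω₁ (Pt t) K ω} ∧
    (NA2 d T Ω₁ K (PModels T Pt) →
      ∀ P ∈ PModels T Pt,
        P {ω | resProj T t ω ∈ {ω : Fin t → Ω₁ | ¬ NA2local d t Ω₁ (Pt t) K ω}} = 0) := by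
  have hKne : ∀ s, s ≤ T → ∀ ω, (K s ω).Nonempty := fun s hs ω =>
    ⟨0, hKorth s hs ω fun _ => le_rfl⟩
  have hdist : ∀ s, s ≤ T → ∀ x, Measurable fun ω => Metric.infEDist x (K s ω) := fun s hs x =>
    measurable_infEDist_of_hit (K s) (hKmeas s hs) (hKclosed s hs) (hKne s hs) x
  have hmem : ∀ s, s ≤ T → ∀ x ω, x ∈ K s ω ↔ Metric.infEDist x (K s ω) = 0 := fun s hs x ω =>
    Metric.mem_iff_infEDist_zero_of_closed (hKclosed s hs ω)
  have hset : {ω : Fin t → Ω₁ | ¬ NA2local d t Ω₁ (Pt t) K ω} =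
      {ω : Fin t → Ω₁ | (LambdaT (Pt t) K ω \ K t ω).Nonempty} := by
    ext ω
    simp only [Set.mem_ofPred_eq, NA2local, not_forall, LambdaT, Set.Nonempty, Set.mem_sdiff,
      exists_prop]
  -- The worst-case expected distance, truncated at one, to the next solvency cone.
  let D : (Fin d → ℝ) → (Fin t → Ω₁) → Ω₁ → ℝ≥0∞ := fun x ω w =>
    min 1 (Metric.infEDist x (K (t + 1) (Fin.snoc ω w)))
  have hD : ∀ x, Measurable (Function.uncurry (D x)) := fun x =>
    measurable_const.min ((hdist (t + 1) ht x).comp (measurable_snoc t))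
  have hDω : ∀ x ω, Measurable (D x ω) := fun x ω => (hD x).of_uncurry_left
  let g : (Fin t → Ω₁) → (Fin d → ℝ) → ℝ≥0∞ := fun ω x =>
    ⨆ P ∈ Pt t ω, ∫⁻ w, D x ω w ∂(P : Measure Ω₁)
  have hgm : ∀ x, Measurable[umSpace (Fin t → Ω₁)] fun ω => g ω x := fun x =>
    measurable_iSup_lintegral (Pt t) (hPtgraph t ht) (D x) (hD x)
  have hgc : ∀ ω, Continuous (g ω) := by
    intro ω
    refine continuous_of_le_add_edist 1 ENNReal.one_ne_top fun x y => ?_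
    refine iSup₂_le fun P hP => ?_
    have hDle : ∀ w, D x ω w ≤ D y ω w + edist x y := by
      intro w
      rw [← min_add_add_right]
      exact min_le_min le_self_add Metric.infEDist_le_infEDist_add_edist
    calc ∫⁻ w, D x ω w ∂(P : Measure Ω₁)
        ≤ ∫⁻ w, (D y ω w + edist x y) ∂(P : Measure Ω₁) := lintegral_mono hDle
      _ = ∫⁻ w, D y ω w ∂(P : Measure Ω₁) + edist x y := by
        rw [lintegral_add_right _ measurable_const, lintegral_const, measure_univ, mul_one]
      _ ≤ g ω y + 1 * edist x y := by
        rw [one_mul]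
        gcongr
        exact le_iSup₂ (f := fun (P : ProbabilityMeasure Ω₁) (_ : P ∈ Pt t ω) =>
          ∫⁻ w, D y ω w ∂(P : Measure Ω₁)) P hP
  have hDset : ∀ x ω, {w | x ∉ K (t + 1) (Fin.snoc ω w)} = {w | D x ω w ≠ 0} := by
    intro x ω
    ext w
    have h1 := hmem (t + 1) ht x (Fin.snoc ω w)
    have h2 : D x ω w = 0 ↔ Metric.infEDist x (K (t + 1) (Fin.snoc ω w)) = 0 := by
      simp only [D, min_eq_iff]
      constructor
      · rintro (⟨h, -⟩ | ⟨h, -⟩)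
        exacts [absurd h one_ne_zero, h]
      · exact fun h => Or.inr ⟨h, by rw [h]; exact zero_le⟩
    exact not_congr (h1.trans h2.symm)
  have hg0 : ∀ ω x, g ω x = 0 ↔
      ∀ P ∈ Pt t ω, (P : Measure Ω₁) {w | x ∉ K (t + 1) (Fin.snoc ω w)} = 0 := by
    intro ω x
    simp only [g, ENNReal.iSup_eq_zero]
    refine forall₂_congr fun P _ => ?_
    rw [lintegral_eq_zero_iff (hDω x ω), hDset]
    exact Iff.rfl
  have hΛ : ∀ ω x, x ∈ LambdaT (Pt t) K ω ↔ g ω x = 0 := by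
    intro ω x
    rw [hg0]
    constructor
    · rintro ⟨B, -, hsub, hB0⟩ P hP
      exact measure_mono_null hsub (hB0 P hP)
    · refine fun h => ⟨_, ?_, subset_rfl, h⟩
      rw [hDset]
      exact hDω x ω (measurableSet_singleton 0).compl
  -- The zeros of `Φ n ω` are the points of `Λ_t(ω)` at distance at least `1/(n+1)` from `K_t(ω)`.
  let Φ : ℕ → (Fin t → Ω₁) → (Fin d → ℝ) → ℝ≥0∞ := fun n ω x =>
    g ω x + (((n : ℝ≥0∞) + 1)⁻¹ - Metric.infEDist x (K t ω))
  have hΦc : ∀ n ω, Continuous (Φ n ω) := fun n ω =>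
    (hgc ω).add ((ENNReal.continuous_sub_left (by simp)).comp Metric.continuous_infEDist)
  have hΦm : ∀ n x, Measurable[umSpace (Fin t → Ω₁)] fun ω => Φ n ω x := by
    intro n x
    have h1 : Measurable fun ω : Fin t → Ω₁ =>
        ((n : ℝ≥0∞) + 1)⁻¹ - Metric.infEDist x (K t ω) :=
      measurable_const.sub (hdist t ht.le x)
    exact Measurable.add (hgm x) (h1.mono le_umSpace le_rfl)
  have hΦ0 : ∀ n ω x, Φ n ω x = 0 → x ∈ LambdaT (Pt t) K ω ∧ x ∉ K t ω := by
    intro n ω x h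
    obtain ⟨h1, h2⟩ := add_eq_zero.1 h
    refine ⟨(hΛ ω x).2 h1, fun hx => ?_⟩
    rw [(hmem t ht.le x ω).1 hx, tsub_zero] at h2
    simp at h2
  have hball : ∀ m : ℕ, IsCompact (Metric.closedBall (0 : Fin d → ℝ) m) := fun m =>
    isCompact_closedBall _ _
  let N : ℕ → ℕ → Set (Fin t → Ω₁) := fun m n =>
    {ω | ∃ x ∈ Metric.closedBall (0 : Fin d → ℝ) m, Φ n ω x = 0}
  have hNm : ∀ m n, MeasurableSet[umSpace (Fin t → Ω₁)] (N m n) := fun m n =>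
    @measurableSet_exists_zero _ _ (umSpace (Fin t → Ω₁)) _ _ (Φ n) (hΦc n) (hΦm n) _ (hball m)
  have hNU : {ω : Fin t → Ω₁ | ¬ NA2local d t Ω₁ (Pt t) K ω} = ⋃ m, ⋃ n, N m n := by
    rw [hset]
    ext ω
    simp only [Set.mem_iUnion]
    constructor
    · rintro ⟨x, hx, hxK⟩
      obtain ⟨n, hn⟩ := ENNReal.exists_inv_nat_lt (mt (hmem t ht.le x ω).2 hxK)
      obtain ⟨m, hm⟩ := exists_nat_ge ‖x‖
      refine ⟨m, n, x, by simpa using hm, ?_⟩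
      have h2 : ((n : ℝ≥0∞) + 1)⁻¹ ≤ (n : ℝ≥0∞)⁻¹ := ENNReal.inv_le_inv.2 le_self_add
      exact add_eq_zero.2 ⟨(hΛ ω x).1 hx, tsub_eq_zero_of_le (h2.trans hn.le)⟩
    · rintro ⟨m, n, x, -, h0⟩
      exact ⟨x, hΦ0 n ω x h0⟩
  refine ⟨hset, ?_, ?_⟩
  · rw [hNU]
    exact @MeasurableSet.iUnion _ _ (umSpace (Fin t → Ω₁)) _ _ fun m =>
      @MeasurableSet.iUnion _ _ (umSpace (Fin t → Ω₁)) _ _ fun n => hNm m n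
  intro hNA P hP
  have hNU' : {ω : Fin T → Ω₁ | resProj T t ω ∈
      {ω : Fin t → Ω₁ | ¬ NA2local d t Ω₁ (Pt t) K ω}} =
      ⋃ m, ⋃ n, {ω | resProj T t ω ∈ N m n} := by
    rw [hNU]
    ext ω
    simp only [Set.mem_iUnion, Set.mem_ofPred_eq]
  rw [hNU']
  refine measure_iUnion_null fun m => measure_iUnion_null fun n => ?_
  obtain ⟨ζ₀, hζ₀m, hζ₀⟩ := @exists_measurable_zero _ _ (umSpace (Fin t → Ω₁)) _ _ _ _ _ _
    (Φ n) (hΦc n) (hΦm n) _ (hball m)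
  classical
  -- The arbitrage position: a selected point of `Λ_t ∖ K_t` where there is one, else nothing.
  let ζ : (Fin t → Ω₁) → Fin d → ℝ := fun ω => if ω ∈ N m n then ζ₀ ω else 0
  have hζm : UMeasurable ζ := by
    have : Measurable[umSpace (Fin t → Ω₁)] ζ :=
      Measurable.ite (p := fun ω => ω ∈ N m n) (hNm m n) hζ₀m
        (@measurable_const _ _ _ (umSpace (Fin t → Ω₁)) _)
    exact fun B hB => this hB
  have hζK : ∀ ω, ω ∈ N m n → ζ ω ∉ K t ω := by
    intro ω hω
    simp only [ζ, if_pos hω]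
    exact (hΦ0 n ω _ (hζ₀ ω hω).2).2
  have hζΛ : ∀ ω, ∀ P ∈ Pt t ω,
      (P : Measure Ω₁) {w | ζ ω ∉ K (t + 1) (Fin.snoc ω w)} = 0 := by
    intro ω
    rw [← hg0, ← hΛ]
    by_cases hω : ω ∈ N m n
    · simp only [ζ, if_pos hω]
      exact (hΦ0 n ω _ (hζ₀ ω hω).2).1
    · simp only [ζ, if_neg hω]
      refine ⟨∅, MeasurableSet.empty, fun w hw => ?_, fun _ _ => measure_empty⟩
      exact hw (hKorth (t + 1) ht _ fun _ => le_rfl)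
  refine measure_mono_null (fun ω hω => hζK _ hω) (hNA t ht ζ hζm ?_ P hP)
  rintro Q ⟨pk, hpk, -, rfl⟩
  have hnull := fubiniProd_succ_notMem_null pk (K (t + 1)) (hKclosed (t + 1) ht)
    (hdist (t + 1) ht) ζ hζm (fun ω => hζΛ ω _ (hpk t ht ω))
  have := fubiniProd_resProj_null (fun t ω => (pk t ω : Measure Ω₁)) (Nat.succ_le_of_lt ht) hnull
  simpa only [Set.mem_ofPred_eq, init_resProj] using this

end
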